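/- arXiv:1105.3888 — 4 statements merged into one kernel-verified Lean document; each statement's English description precedes it below -/
import Mathlib

section
/- Let h : ℝ → ℝ be a differentiable function, let a ∈ ℝ, and suppose there exist constants c > 0, δ > 0 and T ≥ 0 such that for every t ≥ T with a − δ < h(t) < a + δ one has deriv h t ≥ c. Then a is not a cluster value of h at +∞; that is, there is no sequence tₙ → +∞ with h(tₙ) → a (in filter language, ¬ MapClusterPt a atTop h). -/
open Filter Topology

theorem barrier_aux (h : ℝ → ℝ) (hdiff : Differentiable ℝ h) (a : ℝ)
    (c δ T : ℝ)
    (hder : ∀ t, T ≤ t → a - δ < h t → h t < a + δ → c ≤ deriv h t)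
    (k b s e : ℝ) (hk : 0 ≤ k) (hkc : k < c) (hs : T ≤ s) (hse : s ≤ e) (hb : a - δ < b)
    (he : b + k * (e - s) < a + δ) (h0 : b ≤ h s) : b + k * (e - s) ≤ h e := by
  have key := image_le_of_deriv_right_lt_deriv_boundary (f := fun t => - h t)
    (f' := fun t => - deriv h t) (a := s) (b := e) (B := fun t => -(b + k * (t - s)))
    (B' := fun _ => -(k * 1))
    hdiff.continuous.neg.continuousOn
    (fun x _ => (hdiff x).hasDerivAt.neg.hasDerivWithinAt)
    (by simpa using h0)
    (fun x => ((((hasDerivAt_id x).sub_const s).const_mul k).const_add b).neg)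
    (by
      intro x hx hxe
      have h1 : h x = b + k * (x - s) := by simpa only [neg_inj] using hxe
      have h2 : 0 ≤ k * (x - s) := mul_nonneg hk (by linarith [hx.1])
      have h3 : k * (x - s) ≤ k * (e - s) :=
        mul_le_mul_of_nonneg_left (by linarith [hx.2]) hk
      have := hder x (by linarith [hx.1]) (by linarith) (by linarith)
      linarith)
    (Set.right_mem_Icc.2 hse)
  simpa only [neg_le_neg_iff] using key

/-- If `h : ℝ → ℝ` is differentiable and there are `c > 0`, `δ > 0`, `T ≥ 0` such that
`deriv h t ≥ c` whenever `t ≥ T` and `a - δ < h t < a + δ`, then `a` is not a cluster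
value of `h` at `+∞`. -/
theorem stmt_0 (h : ℝ → ℝ) (hdiff : Differentiable ℝ h) (a : ℝ)
    (c δ T : ℝ) (hc : 0 < c) (hδ : 0 < δ) (hT : 0 ≤ T)
    (hder : ∀ t, T ≤ t → a - δ < h t → h t < a + δ → c ≤ deriv h t) :
    ¬ MapClusterPt a atTop h := by
  intro hcl
  have hf := hcl.frequently (p := fun y => y ∈ Set.Ioo (a - δ / 2) (a + δ / 2))
    (Ioo_mem_nhds (by linarith) (by linarith))
  obtain ⟨s, hs, hs1⟩ := frequently_atTop.1 hf T
  have hpos : 0 < 2 * δ / c := by positivity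
  have heq : c / 2 * (s + 2 * δ / c - s) = δ := by field_simp; ring
  have h1 := barrier_aux h hdiff a c δ T hder (c / 2) (a - δ / 2) s (s + 2 * δ / c)
    (by linarith) (by linarith) hs (by linarith) (by linarith) (by linarith) hs1.1.le
  obtain ⟨t, ht, ht1⟩ := frequently_atTop.1 hf (s + 2 * δ / c)
  have h2 := barrier_aux h hdiff a c δ T hder 0 (a + δ / 2) (s + 2 * δ / c) t
    le_rfl hc (by linarith) ht (by linarith) (by linarith) (by linarith)
  linarith [ht1.2]
end

section
/- Let E be a complete real inner product space, f : E → ℝ a differentiable function, and γ : ℝ → E a curve such that for every t ∈ ℝ, HasDerivAt γ (gradient f (γ t)) t. If γ is periodic, i.e. there exists T > 0 with γ(t + T) = γ(t) for all t ∈ ℝ, then γ is constant. In particular a gradient vector field has no nonconstant periodic orbits. -/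
open Filter Topology

/-- A periodic gradient trajectory of a differentiable function on a complete real inner
product space is constant: a gradient vector field has no nonconstant periodic orbits. -/
theorem stmt_2 {E : Type*} [NormedAddCommGroup E] [InnerProductSpace ℝ E] [CompleteSpace E]
    (f : E → ℝ) (hf : Differentiable ℝ f) (γ : ℝ → E)
    (hγ : ∀ t : ℝ, HasDerivAt γ (gradient f (γ t)) t)
    (hper : ∃ T : ℝ, 0 < T ∧ ∀ t : ℝ, γ (t + T) = γ t) :
    ∀ s t : ℝ, γ s = γ t := by
  obtain ⟨T, hT, hp⟩ := hper
  have hg : ∀ t : ℝ, HasDerivAt (fun u => f (γ u)) (‖gradient f (γ t)‖ ^ 2) t := by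
    intro t
    have h1 := (hf (γ t)).hasGradientAt.hasFDerivAt.comp_hasDerivAt t (hγ t)
    have h2 := real_inner_self_eq_norm_sq (gradient f (γ t))
    rw [← h2]
    exact h1
  have hmono : Monotone (fun u => f (γ u)) :=
    monotone_of_deriv_nonneg (fun t => (hg t).differentiableAt)
      (fun t => by rw [(hg t).deriv]; positivity)
  have hper : Function.Periodic γ T := hp
  have hle : ∀ s t : ℝ, f (γ t) ≤ f (γ s) := by
    intro s t
    obtain ⟨n, hn⟩ := exists_nat_ge ((t - s) / T)
    rw [div_le_iff₀ hT] at hn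
    have h1 : f (γ t) ≤ f (γ (s + n * T)) := hmono (by linarith)
    rwa [hper.nat_mul n s] at h1
  have hzero : ∀ t, gradient f (γ t) = 0 := by
    intro t
    have hc : (fun u => f (γ u)) = fun _ => f (γ 0) :=
      funext fun u => le_antisymm (hle 0 u) (hle u 0)
    have h1 := hg t
    rw [hc] at h1
    have h2 := h1.unique (hasDerivAt_const t (f (γ 0)))
    simpa using h2
  exact is_const_of_deriv_eq_zero (fun t => (hγ t).differentiableAt)
    (fun t => by rw [(hγ t).deriv, hzero t])
end

section
/- Let E be a complete real inner product space, f : E → ℝ a differentiable function, and γ : ℝ → E a curve such that for every t ∈ ℝ, HasDerivAt γ (gradient f (γ t)) t. Suppose γ(t) converges to a point p ∈ E as t → +∞. Then for every t₀ with gradient f (γ t₀) ≠ 0 one has f(γ t₀) < f(p). -/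
open Filter Topology

/-- If a gradient trajectory `γ` of a differentiable function `f` on a complete real inner
product space converges to `p` as `t → +∞`, then `f (γ t₀) < f p` at every time `t₀`
where the gradient does not vanish. -/
theorem stmt_3 {E : Type*} [NormedAddCommGroup E] [InnerProductSpace ℝ E] [CompleteSpace E]
    (f : E → ℝ) (hf : Differentiable ℝ f) (γ : ℝ → E)
    (hγ : ∀ t : ℝ, HasDerivAt γ (gradient f (γ t)) t)
    (p : E) (hp : Tendsto γ atTop (𝓝 p)) :
    ∀ t₀ : ℝ, gradient f (γ t₀) ≠ 0 → f (γ t₀) < f p := by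
  have hg : ∀ t, HasDerivAt (fun s => f (γ s)) (‖gradient f (γ t)‖ ^ 2) t := by
    intro t
    have h1 := (hf (γ t)).hasFDerivAt.comp_hasDerivAt t (hγ t)
    rw [← toDual_gradient, InnerProductSpace.toDual_apply_apply,
      real_inner_self_eq_norm_sq] at h1
    exact h1
  have hmono : Monotone (fun s => f (γ s)) :=
    monotone_of_hasDerivAt_nonneg hg (fun t => sq_nonneg _)
  have hlim : Tendsto (fun s => f (γ s)) atTop (𝓝 (f p)) :=
    (hf p).continuousAt.tendsto.comp hp
  have hle : ∀ t, f (γ t) ≤ f p := fun t => hmono.ge_of_tendsto hlim t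
  intro t₀ h0
  by_contra hlt
  have hmax : IsLocalMax (fun s => f (γ s)) t₀ :=
    Eventually.of_forall fun s => (hle s).trans (not_lt.mp hlt)
  have hz := hmax.hasDerivAt_eq_zero (hg t₀)
  exact h0 (by simpa using hz)
end

section
/- Let α be a type, let l be a nontrivial filter on α, let z : α → ℝ be a function tending along l to 0 from the right (Tendsto z l (𝓝[>] 0)), and let f : α → ℝ. Call a real number ν an exponent for f (relative to z and l) if (1) there is a constant C with |f(x)| ≤ C · z(x)^ν eventually along l, and (2) there exists a nonzero real number c that is a cluster value of the function x ↦ f(x)/z(x)^ν along l (MapClusterPt c l (f/z^ν)). Then there is at most one exponent: if ν₁ and ν₂ are both exponents for f, then ν₁ = ν₂. -/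
open Filter Topology

/-- `ν` is an exponent for `f` relative to `z` and the filter `l` if `|f| ≤ C·z^ν`
eventually along `l` and some nonzero real number is a cluster value of `f/z^ν` along
`l`. -/
def IsExponent {α : Type*} (l : Filter α) (z f : α → ℝ) (ν : ℝ) : Prop :=
  (∃ C : ℝ, ∀ᶠ x in l, |f x| ≤ C * z x ^ ν) ∧
  (∃ c : ℝ, c ≠ 0 ∧ MapClusterPt c l (fun x => f x / z x ^ ν))

theorem exponent_aux {α : Type*} (l : Filter α) (z : α → ℝ)
    (hz : Tendsto z l (𝓝[>] (0 : ℝ))) (f : α → ℝ) (a b : ℝ)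
    (h₁ : IsExponent l z f a) (h₂ : IsExponent l z f b) : ¬ a < b := by
  intro hab
  obtain ⟨-, c, hc, hcl⟩ := h₁
  obtain ⟨⟨C, hC⟩, -⟩ := h₂
  have hpos : ∀ᶠ x in l, 0 < z x := hz.eventually self_mem_nhdsWithin
  have hz0 : Tendsto z l (𝓝 0) := hz.mono_right nhdsWithin_le_nhds
  have h0 : Tendsto (fun x => C * z x ^ (b - a)) l (𝓝 0) := by
    have h := (hz0.rpow_const (p := b - a) (Or.inr (by linarith))).const_mul C
    rwa [Real.zero_rpow (by linarith), mul_zero] at h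
  have ht : Tendsto (fun x => f x / z x ^ a) l (𝓝 0) := by
    refine squeeze_zero_norm' ?_ h0
    filter_upwards [hpos, hC] with x hx hfx
    have hp : 0 < z x ^ a := Real.rpow_pos_of_pos hx a
    rw [Real.norm_eq_abs, abs_div, abs_of_pos hp, Real.rpow_sub hx, ← mul_div_assoc]
    gcongr
  have hcl' : ClusterPt c (𝓝 (0 : ℝ)) := ClusterPt.mono hcl ht
  have : (𝓝 c ⊓ 𝓝 (0 : ℝ)).NeBot := hcl'
  exact hc (eq_of_nhds_neBot this)

/-- Uniqueness of the exponent: if `z → 0⁺` along a nontrivial filter `l`, then a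
function `f` admits at most one exponent relative to `z` and `l`. -/
theorem stmt_8 {α : Type*} (l : Filter α) [l.NeBot] (z : α → ℝ)
    (hz : Tendsto z l (𝓝[>] (0 : ℝ))) (f : α → ℝ) (ν₁ ν₂ : ℝ)
    (h₁ : IsExponent l z f ν₁) (h₂ : IsExponent l z f ν₂) : ν₁ = ν₂ := by
  exact le_antisymm (not_lt.mp (exponent_aux l z hz f ν₂ ν₁ h₂ h₁))
    (not_lt.mp (exponent_aux l z hz f ν₁ ν₂ h₁ h₂))
end
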